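/- Consider ẋ = f(x) + εg(t,x,ε) with f ∈ C²(ℝⁿ,ℝⁿ), g ∈ C¹(ℝ×ℝⁿ×[0,1],ℝⁿ) T-periodic in t, unique solutions of Cauchy problems defined on [0,T], Poincaré map 𝒫_ε(v) = x(T,v,ε), P(v) = 𝒫₀(v) − v, Q(v,ε) = (𝒫_ε(v) − 𝒫₀(v))/ε for ε > 0 and Q(v,0) its limit as ε → 0⁺. Let x₀ be a T-periodic limit cycle of ẋ = f(x), z₀ a T-periodic solution of ż = −(f'(x₀(t)))*z with ⟨ẋ₀(t), z₀(t)⟩ ≡ 1, M the Malkin bifurcation function M(θ) = ∫₀ᵀ ⟨g(t,x₀(t+θ),0), z₀(t+θ)⟩ dt, and for each θ let Π_θ ξ = ⟨ξ, z₀(θ)⟩ ẋ₀(θ). Then for every θ ∈ [0,T], Π_θ Q(x₀(θ),0) = M(θ) ẋ₀(θ); in particular Π_θ Q(x₀(θ),0) = 0 if and only if M(θ) = 0 (at points where ẋ₀(θ) ≠ 0). -/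

import Mathlib

open Set Filter Topology
open scoped InnerProductSpace

lemma key_est {E : Type*} [NormedAddCommGroup E] [InnerProductSpace ℝ E] [FiniteDimensional ℝ E]
    (T : ℝ) (hT : 0 < T) (f : E → E) (hf : ContDiff ℝ 2 f) (g : ℝ → E → ℝ → E)
    (hg : ContDiff ℝ 1 fun p : ℝ × E × ℝ => g p.1 p.2.1 p.2.2)
    (u : ℝ → ℝ → E) (y z : ℝ → E) (hu0 : ∀ ε, u ε 0 = y 0)
    (hu : ∀ ε t, HasDerivAt (u ε) (f (u ε t) + ε • g t (u ε t) ε) t)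
    (hy : ∀ t, HasDerivAt y (f (y t)) t)
    (hz : ∀ t, HasDerivAt z (-(ContinuousLinearMap.adjoint (fderiv ℝ f (y t)) (z t))) t) :
    ∃ K ε₀ : ℝ, 0 < ε₀ ∧ ∀ ε, 0 < ε → ε < ε₀ →
      |⟪u ε T - y T, z T⟫_ℝ - ε * ∫ t in (0:ℝ)..T, ⟪g t (y t) 0, z t⟫_ℝ| ≤ ε ^ 2 * K := by
  have hyc : Continuous y := continuous_iff_continuousAt.2 fun t => (hy t).continuousAt
  have hzc : Continuous z := continuous_iff_continuousAt.2 fun t => (hz t).continuousAt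
  obtain ⟨Y, hY⟩ := (isCompact_Icc (a := (0:ℝ)) (b := T)).exists_bound_of_continuousOn
    hyc.continuousOn
  obtain ⟨Z, hZ⟩ := (isCompact_Icc (a := (0:ℝ)) (b := T)).exists_bound_of_continuousOn
    hzc.continuousOn
  have hZ0 : 0 ≤ Z := (norm_nonneg _).trans (hZ 0 ⟨le_rfl, hT.le⟩)
  set R := Y + 1 with hR
  have hBcv : Convex ℝ (Metric.closedBall (0:E) R) := convex_closedBall _ _
  have hBcp : IsCompact (Metric.closedBall (0:E) R) := isCompact_closedBall _ _
  obtain ⟨L, hL⟩ := hf.contDiffOn.exists_lipschitzOnWith (by norm_num) hBcv hBcp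
  have hf' : ContDiff ℝ 1 (fderiv ℝ f) := hf.fderiv_right (by norm_num)
  obtain ⟨L2, hL2⟩ := hf'.contDiffOn.exists_lipschitzOnWith (by norm_num) hBcv hBcp
  have hScp : IsCompact (Icc (0:ℝ) T ×ˢ (Metric.closedBall (0:E) R ×ˢ Icc (0:ℝ) 1)) :=
    isCompact_Icc.prod (hBcp.prod isCompact_Icc)
  have hScv : Convex ℝ (Icc (0:ℝ) T ×ˢ (Metric.closedBall (0:E) R ×ˢ Icc (0:ℝ) 1)) :=
    (convex_Icc _ _).prod (hBcv.prod (convex_Icc _ _))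
  obtain ⟨Lg, hLg⟩ := hg.contDiffOn.exists_lipschitzOnWith (by norm_num) hScv hScp
  obtain ⟨G, hG⟩ := hScp.exists_bound_of_continuousOn hg.continuous.continuousOn
  have hyB : ∀ t ∈ Icc 0 T, y t ∈ Metric.closedBall (0:E) R := fun t ht => by
    rw [mem_closedBall_zero_iff]; linarith [hY t ht]
  have hG0 : 0 ≤ G := (norm_nonneg _).trans
    (hG (0, y 0, 0) ⟨⟨le_rfl, hT.le⟩, hyB 0 ⟨le_rfl, hT.le⟩, by simp⟩)
  set C := G + 1 with hC
  set D := C * Real.exp ((L + 2) * T) with hD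
  have hL0 : (0:ℝ) ≤ L := L.2
  have hD1 : 1 ≤ D := by
    have h1 : 1 ≤ Real.exp ((L + 2) * T) := Real.one_le_exp (by positivity)
    have h2 : 1 ≤ C := by linarith
    nlinarith
  refine ⟨(L2 * D ^ 2 + Lg * D) * Z * T, 1 / D, by positivity, fun ε hε hε1 => ?_⟩
  have hεD : ε * D < 1 := by rwa [lt_div_iff₀ (by positivity)] at hε1
  have hεle : ε ≤ 1 := by nlinarith
  have hinB : ∀ t ∈ Icc 0 T, ‖u ε t - y t‖ ≤ 1 → u ε t ∈ Metric.closedBall (0:E) R := by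
    intro t ht h
    rw [mem_closedBall_zero_iff]
    have := norm_add_le (u ε t - y t) (y t)
    rw [sub_add_cancel] at this
    linarith [hY t ht]
  have hBle : ∀ t ∈ Icc 0 T, ε * C * Real.exp ((L + 2) * t) ≤ ε * D := by
    intro t ht
    rw [hD, ← mul_assoc]
    gcongr
    exact ht.2
  have hdiff : ∀ t ∈ Icc 0 T, ‖u ε t - y t‖ ≤ ε * C * Real.exp ((L + 2) * t) := by
    have hd : ∀ t, HasDerivAt (fun t => u ε t - y t)
      (f (u ε t) + ε • g t (u ε t) ε - f (y t)) t := fun t => (hu ε t).sub (hy t)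
    refine fun t ht => image_norm_le_of_norm_deriv_right_lt_deriv_boundary (a := 0) (b := T)
      (f := fun t => u ε t - y t)
      (f' := fun t => f (u ε t) + ε • g t (u ε t) ε - f (y t))
      (B := fun t => ε * C * Real.exp ((L + 2) * t))
      (B' := fun t => ε * C * (Real.exp ((L + 2) * t) * (L + 2)))
      (fun t _ => (hd t).continuousAt.continuousWithinAt)
      (fun t _ => (hd t).hasDerivWithinAt) ?_ ?_ ?_ ht
    · simp only [hu0, sub_self, norm_zero]; positivity
    · intro x
      have := ((hasDerivAt_id x).const_mul ((L:ℝ) + 2)).exp.const_mul (ε * C)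
      simpa using this
    · intro t ht heq
      have ht' := Ico_subset_Icc_self ht
      try simp only at heq
      have hle1 : ‖u ε t - y t‖ ≤ 1 := by rw [heq]; linarith [hBle t ht']
      have hub := hinB t ht' hle1
      have h1 : ‖f (u ε t) - f (y t)‖ ≤ L * ‖u ε t - y t‖ := by
        simpa [dist_eq_norm] using hL.dist_le_mul _ hub _ (hyB t ht')
      have h2 : ‖g t (u ε t) ε‖ ≤ G := hG (t, u ε t, ε) ⟨ht', hub, hε.le, hεle⟩
      have h3 : ‖f (u ε t) + ε • g t (u ε t) ε - f (y t)‖ ≤ L * ‖u ε t - y t‖ + ε * G := by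
        rw [show f (u ε t) + ε • g t (u ε t) ε - f (y t)
          = (f (u ε t) - f (y t)) + ε • g t (u ε t) ε by abel]
        refine (norm_add_le _ _).trans (add_le_add h1 ?_)
        rw [norm_smul, Real.norm_of_nonneg hε.le]
        gcongr
      rw [heq] at h3
      have h4 : 1 ≤ Real.exp ((L + 2) * t) :=
        Real.one_le_exp (mul_nonneg (by positivity) ht.1)
      have h5 : ε * G < ε * C := by gcongr; linarith
      have h6 : ε * C ≤ ε * C * Real.exp ((L + 2) * t) := le_mul_of_one_le_right (by positivity) h4
      have h7 : 0 ≤ ε * C := by positivity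
      linarith
  have hgc : Continuous fun t => ⟪g t (y t) 0, z t⟫_ℝ := by
    have h1 : Continuous fun t => g t (y t) 0 :=
      hg.continuous.comp (continuous_id.prodMk (hyc.prodMk continuous_const))
    exact h1.inner hzc
  have hw : ∀ t, HasDerivAt (fun t => ⟪u ε t - y t, z t⟫_ℝ
      - ε * ∫ s in (0:ℝ)..t, ⟪g s (y s) 0, z s⟫_ℝ)
      (⟪f (u ε t) - f (y t) - fderiv ℝ f (y t) (u ε t - y t), z t⟫_ℝ
        + ε * ⟪g t (u ε t) ε - g t (y t) 0, z t⟫_ℝ) t := by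
    intro t
    have h1 := (((hu ε t).sub (hy t)).inner ℝ (hz t)).sub
      ((hgc.integral_hasStrictDerivAt 0 t).hasDerivAt.const_mul ε)
    refine h1.congr_deriv ?_
    simp only [Pi.sub_apply, inner_neg_right, ContinuousLinearMap.adjoint_inner_right,
      inner_sub_left, inner_add_left, real_inner_smul_left, map_sub]
    ring
  have hb : ∀ t ∈ Ico 0 T, ‖⟪f (u ε t) - f (y t) - fderiv ℝ f (y t) (u ε t - y t), z t⟫_ℝ
        + ε * ⟪g t (u ε t) ε - g t (y t) 0, z t⟫_ℝ‖ ≤ ε ^ 2 * ((L2 * D ^ 2 + Lg * D) * Z) := by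
    intro t ht
    have ht' := Ico_subset_Icc_self ht
    have hd : ‖u ε t - y t‖ ≤ ε * D := (hdiff t ht').trans (hBle t ht')
    have hub := hinB t ht' (hd.trans hεD.le)
    have h1 : ‖f (u ε t) - f (y t) - fderiv ℝ f (y t) (u ε t - y t)‖
        ≤ (L2 * (ε * D)) * ‖u ε t - y t‖ := by
      refine (convex_segment (𝕜 := ℝ) (y t) (u ε t)).norm_image_sub_le_of_norm_fderiv_le' (𝕜 := ℝ)
        (fun x _ => hf.differentiable (by norm_num) x) (fun x hx => ?_)
        (left_mem_segment ℝ _ _) (right_mem_segment ℝ _ _)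
      have hxB := hBcv.segment_subset (hyB t ht') hub hx
      have h2 := hL2.dist_le_mul _ hxB _ (hyB t ht')
      rw [dist_eq_norm, dist_eq_norm] at h2
      refine h2.trans ?_
      gcongr
      exact (norm_sub_le_of_mem_segment hx).trans hd
    have h1' : ‖f (u ε t) - f (y t) - fderiv ℝ f (y t) (u ε t - y t)‖
        ≤ ε ^ 2 * (L2 * D ^ 2) := by
      refine h1.trans ?_
      calc _ ≤ (L2 * (ε * D)) * (ε * D) := by gcongr
        _ = _ := by ring
    have h2 : ‖g t (u ε t) ε - g t (y t) 0‖ ≤ Lg * (ε * D) := by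
      have := hLg.dist_le_mul (t, u ε t, ε) ⟨ht', hub, hε.le, hεle⟩
        (t, y t, 0) ⟨ht', hyB t ht', by simp⟩
      rw [dist_eq_norm] at this
      refine this.trans ?_
      gcongr
      have hεε : ε ≤ ε * D := le_mul_of_one_le_right hε.le hD1
      rw [Prod.dist_eq, Prod.dist_eq]
      refine max_le ?_ (max_le ?_ ?_)
      · rw [dist_self]; positivity
      · rw [dist_eq_norm]; exact hd
      · rw [dist_eq_norm, sub_zero, Real.norm_of_nonneg hε.le]; exact hεε
    calc _ ≤ ‖⟪f (u ε t) - f (y t) - fderiv ℝ f (y t) (u ε t - y t), z t⟫_ℝ‖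
          + ‖ε * ⟪g t (u ε t) ε - g t (y t) 0, z t⟫_ℝ‖ := norm_add_le _ _
      _ ≤ ε ^ 2 * (L2 * D ^ 2) * Z + ε * (Lg * (ε * D) * Z) := by
        rw [norm_mul, Real.norm_of_nonneg hε.le]
        have hz' := hZ t ht'
        gcongr
        · refine (norm_inner_le_norm _ _).trans ?_
          gcongr
        · refine (norm_inner_le_norm _ _).trans ?_
          gcongr
      _ = _ := by ring
  have := norm_image_sub_le_of_norm_deriv_le_segment' (fun t _ => (hw t).hasDerivWithinAt) hb T
    ⟨hT.le, le_rfl⟩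
  simp only [hu0, sub_self, inner_zero_left, intervalIntegral.integral_same, mul_zero, sub_zero,
    Real.norm_eq_abs] at this
  linarith

/-- identity used in the proof of Theorem 3: with
`Π_θ ξ = ⟨ξ, z₀(θ)⟩ẋ₀(θ)` and `Q` as in Lemma 2, `Π_θ Q(x₀(θ),0) = M(θ)ẋ₀(θ)`;
in particular, where `ẋ₀(θ) ≠ 0`, `Π_θ Q(x₀(θ),0) = 0 ↔ M(θ) = 0`. -/
theorem stmt_16 {n : ℕ} (T : ℝ) (hT : 0 < T)
    (f : EuclideanSpace ℝ (Fin n) → EuclideanSpace ℝ (Fin n))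
    (hf : ContDiff ℝ 2 f)
    (g : ℝ → EuclideanSpace ℝ (Fin n) → ℝ → EuclideanSpace ℝ (Fin n))
    (hg : ContDiff ℝ 1 fun p : ℝ × EuclideanSpace ℝ (Fin n) × ℝ => g p.1 p.2.1 p.2.2)
    (hgT : ∀ t x e, g (t + T) x e = g t x e)
    (X : ℝ → EuclideanSpace ℝ (Fin n) → ℝ → EuclideanSpace ℝ (Fin n))
    (hX0 : ∀ v ε, X 0 v ε = v)
    (hXode : ∀ v ε t, HasDerivAt (fun s => X s v ε)
      (f (X t v ε) + ε • g t (X t v ε) ε) t)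
    (hXuniq : ∀ v ε (u : ℝ → EuclideanSpace ℝ (Fin n)), u 0 = v →
      (∀ t, HasDerivAt u (f (u t) + ε • g t (u t) ε) t) → ∀ t, u t = X t v ε)
    (x₀ : ℝ → EuclideanSpace ℝ (Fin n))
    (hx₀ : ∀ t, HasDerivAt x₀ (f (x₀ t)) t)
    (hx₀T : ∀ t, x₀ (t + T) = x₀ t)
    (z₀ : ℝ → EuclideanSpace ℝ (Fin n))
    (hz₀ : ∀ t, HasDerivAt z₀ (-(ContinuousLinearMap.adjoint (fderiv ℝ f (x₀ t)) (z₀ t))) t)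
    (hz₀T : ∀ t, z₀ (t + T) = z₀ t)
    (hnorm : ∀ t, ⟪deriv x₀ t, z₀ t⟫_ℝ = 1)
    (Q : EuclideanSpace ℝ (Fin n) → ℝ → EuclideanSpace ℝ (Fin n))
    (hQdef : ∀ v, ∀ ε ∈ Ioc (0:ℝ) 1, Q v ε = ε⁻¹ • (X T v ε - X T v 0))
    (hQlim : ∀ v, Tendsto (fun ε : ℝ => ε⁻¹ • (X T v ε - X T v 0))
      (𝓝[>] (0:ℝ)) (𝓝 (Q v 0))) :
    ∀ θ ∈ Icc (0:ℝ) T,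
      ⟪Q (x₀ θ) 0, z₀ θ⟫_ℝ • deriv x₀ θ
        = (∫ t in (0:ℝ)..T, ⟪g t (x₀ (t + θ)) 0, z₀ (t + θ)⟫_ℝ) • deriv x₀ θ ∧
      (deriv x₀ θ ≠ 0 →
        (⟪Q (x₀ θ) 0, z₀ θ⟫_ℝ • deriv x₀ θ = 0 ↔
          (∫ t in (0:ℝ)..T, ⟪g t (x₀ (t + θ)) 0, z₀ (t + θ)⟫_ℝ) = 0)) := by
  intro θ hθ
  have hmain : ⟪Q (x₀ θ) 0, z₀ θ⟫_ℝ
      = ∫ t in (0:ℝ)..T, ⟪g t (x₀ (t + θ)) 0, z₀ (t + θ)⟫_ℝ := by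
    have hy : ∀ t, HasDerivAt (fun t => x₀ (t + θ)) (f (x₀ (t + θ))) t :=
      fun t => (hx₀ (t + θ)).comp_add_const t θ
    have hz : ∀ t, HasDerivAt (fun t => z₀ (t + θ))
        (-(ContinuousLinearMap.adjoint (fderiv ℝ f (x₀ (t + θ))) (z₀ (t + θ)))) t :=
      fun t => (hz₀ (t + θ)).comp_add_const t θ
    have hyX : ∀ t, x₀ (t + θ) = X t (x₀ θ) 0 :=
      hXuniq (x₀ θ) 0 (fun t => x₀ (t + θ)) (by simp) (fun t => by simpa using hy t)
    obtain ⟨K, ε₀, hε₀, hK⟩ := key_est T hT f hf g hg (fun ε t => X t (x₀ θ) ε)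
      (fun t => x₀ (t + θ)) (fun t => z₀ (t + θ)) (by simp [hX0])
      (fun ε t => hXode (x₀ θ) ε t) hy hz
    have hzT : z₀ (T + θ) = z₀ θ := by rw [add_comm]; exact hz₀T θ
    simp only [hzT, hyX T] at hK
    set I := ∫ t in (0:ℝ)..T, ⟪g t (x₀ (t + θ)) 0, z₀ (t + θ)⟫_ℝ with hI
    have l1 := (hQlim (x₀ θ)).inner (tendsto_const_nhds (x := z₀ θ)) (𝕜 := ℝ)
    refine tendsto_nhds_unique l1 ?_
    rw [tendsto_iff_norm_sub_tendsto_zero]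
    have l2 : Tendsto (fun ε : ℝ => ε * K) (𝓝[>] 0) (𝓝 0) := by
      have : Tendsto (fun ε : ℝ => ε * K) (𝓝 0) (𝓝 (0 * K)) :=
        (continuous_id.mul continuous_const).tendsto 0
      rw [zero_mul] at this
      exact this.mono_left nhdsWithin_le_nhds
    refine squeeze_zero' (Eventually.of_forall fun _ => norm_nonneg _) ?_ l2
    filter_upwards [Ioo_mem_nhdsGT hε₀] with ε hε
    have h := hK ε hε.1 hε.2
    have hpos := hε.1
    have e : ⟪ε⁻¹ • (X T (x₀ θ) ε - X T (x₀ θ) 0), z₀ θ⟫_ℝ - I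
        = ε⁻¹ * (⟪X T (x₀ θ) ε - X T (x₀ θ) 0, z₀ θ⟫_ℝ - ε * I) := by
      rw [real_inner_smul_left]
      field_simp
    rw [e, norm_mul, Real.norm_eq_abs (_ - _), Real.norm_of_nonneg (inv_nonneg.2 hpos.le)]
    calc _ ≤ ε⁻¹ * (ε ^ 2 * K) := by gcongr
      _ = ε * K := by field_simp
  rw [hmain]
  exact ⟨rfl, fun h => by simp [h]⟩
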